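/- Let F be a real n×n matrix and b ∈ ℝⁿ such that the Kalman controllability matrix M_c = [b, Fb, …, F^{n−1}b] is invertible. Let hᵀ = e_nᵀ M_c^{−1} and let T_c be the n×n matrix whose i-th row is hᵀ F^{i−1} for i = 1, …, n. Suppose ξ : ℝ → ℝⁿ is differentiable and u : ℝ → ℝ is a function such that ξ'(t) = F ξ(t) + b u(t) for all t, and define y(t) = hᵀ ξ(t). Then y is n times differentiable, T_c is invertible, ξ(t) = T_c^{−1} (y(t), y'(t), …, y^{(n−1)}(t))ᵀ for all t, and u(t) = y^{(n)}(t) − e_nᵀ T_c F T_c^{−1} (y(t), y'(t), …, y^{(n−1)}(t))ᵀ for all t. -/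

import Mathlib

/-!
The last row `h` of `Mc⁻¹` satisfies `h Fᵏ b = 0` for `k < n - 1` and `h Fⁿ⁻¹ b = 1`.
Hence the input does not enter the first `n - 1` derivatives of `y = h ξ`, so that
`y⁽ᵐ⁾ = h Fᵐ ξ` for `m < n` (the vector of these is `Tc ξ`) and `y⁽ⁿ⁾ = h Fⁿ ξ + u`, where
`h Fⁿ` is the last row of `Tc F`. The product `Tc Mc` is the Hankel matrix with entries
`h Fⁱ⁺ʲ b`; it has ones on the antidiagonal and zeros above, so `Tc` is invertible.
-/

open Matrix

section SystemMatrices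

variable {R ι : Type*} [Semiring R] [Fintype ι] [DecidableEq ι]

/-- The Kalman matrix `[b, Fb, …, Fʳ⁻¹b]` of the pair `(F, b)`, with an arbitrary number `r` of
columns. -/
def controllabilityMatrix (F : Matrix ι ι R) (b : ι → R) (r : ℕ) : Matrix ι (Fin r) R :=
  of fun i j => (F ^ (j : ℕ) *ᵥ b) i

/-- The observability matrix with rows `h, hF, …, hFʳ⁻¹` of the output `h ξ`; it maps the state
to the output derivatives of orders below `r` of the unforced system `ξ' = F ξ`. -/
def observabilityMatrix (h : ι → R) (F : Matrix ι ι R) (r : ℕ) : Matrix (Fin r) ι R :=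
  of fun i j => (h ᵥ* F ^ (i : ℕ)) j

/-- The Markov parameter `h Fᵏ b` of the system `ξ' = F ξ + b u` with output `h ξ`: the gain with
which the input enters the derivative of order `k + 1` of the output. -/
def markovParameter (h : ι → R) (F : Matrix ι ι R) (b : ι → R) (k : ℕ) : R :=
  h ⬝ᵥ (F ^ k *ᵥ b)

lemma observabilityMatrix_mul_controllabilityMatrix_apply (h : ι → R) (F : Matrix ι ι R)
    (b : ι → R) {r s : ℕ} (i : Fin r) (j : Fin s) :
    (observabilityMatrix h F r * controllabilityMatrix F b s) i j =
      markovParameter h F b (i + j) := by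
  rw [markovParameter, pow_add, ← mulVec_mulVec, dotProduct_mulVec]
  rfl

lemma observabilityMatrix_mul_apply (h : ι → R) (F : Matrix ι ι R) {r : ℕ} (i : Fin r) :
    (observabilityMatrix h F r * F) i = h ᵥ* F ^ (i + 1 : ℕ) := by
  rw [pow_succ, ← vecMul_vecMul]
  rfl

end SystemMatrices

section Invertibility

variable {R : Type*} [CommRing R]

lemma markovParameter_inv_controllabilityMatrix {n : ℕ} {F : Matrix (Fin n) (Fin n) R}
    {b : Fin n → R} (hctrb : IsUnit (controllabilityMatrix F b n)) (i j : Fin n) :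
    markovParameter ((controllabilityMatrix F b n)⁻¹ i) F b j = if i = j then 1 else 0 := by
  rw [← one_apply, ← nonsing_inv_mul _ ((isUnit_iff_isUnit_det _).1 hctrb)]
  rfl

lemma isUnit_hankel_of_eq_zero {d : ℕ} {a : ℕ → R} (hzero : ∀ k < d, a k = 0)
    (hunit : IsUnit (a d)) : IsUnit (of fun i j : Fin (d + 1) => a (i + j)) := by
  -- Reversing the columns turns the zeros above the antidiagonal into a lower triangular shape.
  rw [← isUnit_submatrix_equiv (Equiv.refl _) Fin.revPerm, isUnit_iff_isUnit_det,
    det_of_isLowerTriangular]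
  · refine IsUnit.prod_univ_iff.2 fun i => ?_
    have hdiag : (i : ℕ) + (d - i) = d := by omega
    simpa [hdiag] using hunit
  · intro i j (hij : i < j)
    have hlt : (i : ℕ) + Fin.rev j < d := by
      rw [Fin.val_rev]
      omega
    exact hzero _ hlt

lemma isUnit_observabilityMatrix {d : ℕ} {h : Fin (d + 1) → R}
    {F : Matrix (Fin (d + 1)) (Fin (d + 1)) R} {b : Fin (d + 1) → R}
    (hzero : ∀ k < d, markovParameter h F b k = 0) (hunit : IsUnit (markovParameter h F b d)) :
    IsUnit (observabilityMatrix h F (d + 1)) := by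
  have hmul : observabilityMatrix h F (d + 1) * controllabilityMatrix F b (d + 1) =
      of fun i j : Fin (d + 1) => markovParameter h F b (i + j) :=
    Matrix.ext (observabilityMatrix_mul_controllabilityMatrix_apply h F b)
  have hdet := (isUnit_iff_isUnit_det _).1 (hmul ▸ isUnit_hankel_of_eq_zero hzero hunit)
  rw [det_mul] at hdet
  exact (isUnit_iff_isUnit_det _).2 (isUnit_of_mul_isUnit_left hdet)

lemma mul_inv_apply_dotProduct_mulVec {m ι : Type*} [Fintype ι] [DecidableEq ι]
    (A : Matrix m ι R) {T : Matrix ι ι R} (hT : IsUnit T) (i : m) (x : ι → R) :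
    (A * T⁻¹) i ⬝ᵥ (T *ᵥ x) = A i ⬝ᵥ x := by
  rw [dotProduct_mulVec, ← mul_apply_eq_vecMul,
    nonsing_inv_mul_cancel_right _ _ ((isUnit_iff_isUnit_det _).1 hT)]

end Invertibility

section Output

lemma hasDerivAt_const_dotProduct {𝕜 𝔸 ι : Type*} [NontriviallyNormedField 𝕜] [NormedRing 𝔸]
    [NormedAlgebra 𝕜 𝔸] [Fintype ι] (c : ι → 𝔸) {ξ : 𝕜 → ι → 𝔸} {ξ' : ι → 𝔸} {t : 𝕜}
    (hξ : HasDerivAt ξ ξ' t) : HasDerivAt (fun s => c ⬝ᵥ ξ s) (c ⬝ᵥ ξ') t :=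
  HasDerivAt.fun_sum fun i _ => (hasDerivAt_pi.1 hξ i).const_mul (c i)

variable {𝕜 𝔸 ι : Type*} [NontriviallyNormedField 𝕜] [NormedCommRing 𝔸] [NormedAlgebra 𝕜 𝔸]
  [Fintype ι] [DecidableEq ι] {F : Matrix ι ι 𝔸} {b : ι → 𝔸} {ξ : 𝕜 → ι → 𝔸} {u : 𝕜 → 𝔸}

lemma hasDerivAt_vecMul_pow_dotProduct {t : 𝕜} (hξ : HasDerivAt ξ (F *ᵥ ξ t + u t • b) t)
    (h : ι → 𝔸) (m : ℕ) :
    HasDerivAt (fun s => (h ᵥ* F ^ m) ⬝ᵥ ξ s)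
      ((h ᵥ* F ^ (m + 1)) ⬝ᵥ ξ t + u t * markovParameter h F b m) t := by
  have hvalue : (h ᵥ* F ^ m) ⬝ᵥ (F *ᵥ ξ t + u t • b) =
      (h ᵥ* F ^ (m + 1)) ⬝ᵥ ξ t + u t * markovParameter h F b m := by
    rw [markovParameter, dotProduct_add, dotProduct_smul, dotProduct_mulVec, dotProduct_mulVec,
      vecMul_vecMul, ← pow_succ, smul_eq_mul]
  exact hvalue ▸ hasDerivAt_const_dotProduct _ hξ

variable {h : ι → 𝔸} {m : ℕ}

lemma iteratedDeriv_output_of_markovParameter_eq_zero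
    (hξ : ∀ t, HasDerivAt ξ (F *ᵥ ξ t + u t • b) t) (hzero : ∀ k < m, markovParameter h F b k = 0) :
    iteratedDeriv m (fun t => h ⬝ᵥ ξ t) = fun t => (h ᵥ* F ^ m) ⬝ᵥ ξ t := by
  induction m with
  | zero => simp
  | succ m ih =>
    funext t
    rw [iteratedDeriv_succ, ih fun k hk => hzero k (hk.trans m.lt_succ_self),
      (hasDerivAt_vecMul_pow_dotProduct (hξ t) h m).deriv, hzero m m.lt_succ_self, mul_zero,
      add_zero]

lemma iteratedDeriv_succ_output_of_markovParameter_eq_zero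
    (hξ : ∀ t, HasDerivAt ξ (F *ᵥ ξ t + u t • b) t) (hzero : ∀ k < m, markovParameter h F b k = 0)
    (t : 𝕜) :
    iteratedDeriv (m + 1) (fun t => h ⬝ᵥ ξ t) t =
      (h ᵥ* F ^ (m + 1)) ⬝ᵥ ξ t + u t * markovParameter h F b m := by
  rw [iteratedDeriv_succ, iteratedDeriv_output_of_markovParameter_eq_zero hξ hzero,
    (hasDerivAt_vecMul_pow_dotProduct (hξ t) h m).deriv]

lemma differentiable_iteratedDeriv_output_of_markovParameter_eq_zero
    (hξ : ∀ t, HasDerivAt ξ (F *ᵥ ξ t + u t • b) t) (hzero : ∀ k < m, markovParameter h F b k = 0) :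
    Differentiable 𝕜 (iteratedDeriv m fun t => h ⬝ᵥ ξ t) := by
  rw [iteratedDeriv_output_of_markovParameter_eq_zero hξ hzero]
  exact fun t => (hasDerivAt_vecMul_pow_dotProduct (hξ t) h m).differentiableAt

lemma iteratedDeriv_output_eq_observabilityMatrix_mulVec
    (hξ : ∀ t, HasDerivAt ξ (F *ᵥ ξ t + u t • b) t) (hzero : ∀ k < m, markovParameter h F b k = 0)
    (t : 𝕜) :
    (fun i : Fin (m + 1) => iteratedDeriv i (fun s => h ⬝ᵥ ξ s) t) =
      observabilityMatrix h F (m + 1) *ᵥ ξ t := by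
  funext i
  rw [iteratedDeriv_output_of_markovParameter_eq_zero hξ fun k hk => hzero k (by omega)]
  rfl

end Output

theorem stmt_7_general {𝕜 𝔸 : Type*} [NontriviallyNormedField 𝕜] [NormedCommRing 𝔸]
    [NormedAlgebra 𝕜 𝔸] {d : ℕ} {F : Matrix (Fin (d + 1)) (Fin (d + 1)) 𝔸} {b : Fin (d + 1) → 𝔸}
    {Mc : Matrix (Fin (d + 1)) (Fin (d + 1)) 𝔸} (hMc : Mc = controllabilityMatrix F b (d + 1))
    (hctrb : IsUnit Mc) {h : Fin (d + 1) → 𝔸} (hh : h = Mc⁻¹ (Fin.last d))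
    {Tc : Matrix (Fin (d + 1)) (Fin (d + 1)) 𝔸} (hTc : Tc = observabilityMatrix h F (d + 1))
    {ξ : 𝕜 → Fin (d + 1) → 𝔸} {u : 𝕜 → 𝔸} (hξ : ∀ t, HasDerivAt ξ (F *ᵥ ξ t + u t • b) t)
    {y : 𝕜 → 𝔸} (hy : y = fun t => h ⬝ᵥ ξ t) :
    (∀ m < d + 1, Differentiable 𝕜 (iteratedDeriv m y)) ∧
    IsUnit Tc ∧
    (∀ t, ξ t = Tc⁻¹ *ᵥ fun i : Fin (d + 1) => iteratedDeriv i y t) ∧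
    (∀ t, u t = iteratedDeriv (d + 1) y t -
      (Tc * F * Tc⁻¹) (Fin.last d) ⬝ᵥ fun i : Fin (d + 1) => iteratedDeriv i y t) := by
  subst hMc hy
  have hmarkov (j : Fin (d + 1)) : markovParameter h F b j = if Fin.last d = j then 1 else 0 :=
    hh ▸ markovParameter_inv_controllabilityMatrix hctrb (Fin.last d) j
  have hzero (k : ℕ) (hk : k < d) : markovParameter h F b k = 0 := by
    simpa [Fin.ext_iff, hk.ne'] using hmarkov ⟨k, by omega⟩
  have hone : markovParameter h F b d = 1 := by simpa using hmarkov (Fin.last d)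
  have hunit : IsUnit Tc := hTc ▸ isUnit_observabilityMatrix hzero (hone ▸ isUnit_one)
  have hvec (t : 𝕜) : (fun i : Fin (d + 1) => iteratedDeriv i (fun s => h ⬝ᵥ ξ s) t) =
      Tc *ᵥ ξ t := hTc ▸ iteratedDeriv_output_eq_observabilityMatrix_mulVec hξ hzero t
  refine ⟨fun m hm => ?_, hunit, fun t => ?_, fun t => ?_⟩
  · exact differentiable_iteratedDeriv_output_of_markovParameter_eq_zero hξ
      fun k hk => hzero k (by omega)
  · rw [hvec, mulVec_mulVec, nonsing_inv_mul _ ((isUnit_iff_isUnit_det _).1 hunit), one_mulVec]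
  · rw [hvec, mul_inv_apply_dotProduct_mulVec _ hunit, hTc, observabilityMatrix_mul_apply,
      iteratedDeriv_succ_output_of_markovParameter_eq_zero hξ hzero, hone, mul_one, Fin.val_last,
      add_sub_cancel_left]

/-- For a controllable pair `(F, b)`, `y(t) = hᵀ ξ(t)` with
`hᵀ = e_nᵀ M_c⁻¹` is a flat output of `ξ' = F ξ + b u`: it is `n` times
differentiable and differentially parametrizes the state and the input. -/
theorem stmt_7 (n : ℕ) (hn : 0 < n) (F : Matrix (Fin n) (Fin n) ℝ) (b : Fin n → ℝ)
    (Mc : Matrix (Fin n) (Fin n) ℝ)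
    (hMc : Mc = Matrix.of fun i j : Fin n => (F ^ (j : ℕ)).mulVec b i)
    (hctrb : IsUnit Mc)
    (h : Fin n → ℝ) (hh : h = Mc⁻¹ ⟨n - 1, by omega⟩)
    (Tc : Matrix (Fin n) (Fin n) ℝ)
    (hTc : Tc = Matrix.of fun i j : Fin n => Matrix.vecMul h (F ^ (i : ℕ)) j)
    (ξ : ℝ → Fin n → ℝ) (u : ℝ → ℝ)
    (hξ : ∀ t : ℝ, HasDerivAt ξ (F.mulVec (ξ t) + u t • b) t)
    (y : ℝ → ℝ) (hy : y = fun t => h ⬝ᵥ ξ t) :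
    (∀ m : ℕ, m < n → Differentiable ℝ (iteratedDeriv m y)) ∧
    IsUnit Tc ∧
    (∀ t : ℝ, ξ t = Tc⁻¹.mulVec fun i : Fin n => iteratedDeriv (i : ℕ) y t) ∧
    (∀ t : ℝ, u t = iteratedDeriv n y t -
      (Tc * F * Tc⁻¹) ⟨n - 1, by omega⟩ ⬝ᵥ fun i : Fin n => iteratedDeriv (i : ℕ) y t) := by
  obtain ⟨d, rfl⟩ := Nat.exists_eq_add_one.2 hn
  exact stmt_7_general hMc hctrb hh hTc hξ hy
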